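/- arXiv:1912.13501 — 2 statements merged into one kernel-verified Lean document; each statement's English description precedes it below -/
import Mathlib

section
/- In the MM-SPIR model (with all constraints), for every size-P subset 𝒫 of {1,…,K} and every database index n ∈ {1,…,N}, the conditional entropy of any single answer given its query is bounded by the entropy of the common randomness: H(A_n^{[𝒫]} | Q_n^{[𝒫]}) ≤ H(S). -/
open Finset

namespace MMSPIR

variable {Ω : Type} [Fintype Ω]

/-- Probability that the random variable `X` takes the value `v`,
under the weight function `p` on the finite sample space `Ω`. -/
noncomputable def prob (p : Ω → ℝ) {V : Type} [DecidableEq V] (X : Ω → V) (v : V) : ℝ :=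
  ∑ ω ∈ Finset.univ.filter (fun ω => X ω = v), p ω

/-- Shannon entropy of `X`, with logarithm taken to base `q`. -/
noncomputable def ent (q : ℕ) (p : Ω → ℝ) {V : Type} [Fintype V] [DecidableEq V]
    (X : Ω → V) : ℝ :=
  -∑ v : V, prob p X v * Real.logb q (prob p X v)

/-- Conditional entropy `H(X | Y)`, base `q`. -/
noncomputable def cent (q : ℕ) (p : Ω → ℝ) {V W : Type} [Fintype V] [DecidableEq V]
    [Fintype W] [DecidableEq W] (X : Ω → V) (Y : Ω → W) : ℝ :=
  ent q p (fun ω => (X ω, Y ω)) - ent q p Y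

/-- Mutual information `I(X ; Y)`, base `q`. -/
noncomputable def mi (q : ℕ) (p : Ω → ℝ) {V W : Type} [Fintype V] [DecidableEq V]
    [Fintype W] [DecidableEq W] (X : Ω → V) (Y : Ω → W) : ℝ :=
  ent q p X + ent q p Y - ent q p (fun ω => (X ω, Y ω))

/-- Conditional mutual information `I(X ; Y | Z)`, base `q`. -/
noncomputable def cmi (q : ℕ) (p : Ω → ℝ) {U V W : Type} [Fintype U] [DecidableEq U]
    [Fintype V] [DecidableEq V] [Fintype W] [DecidableEq W]
    (X : Ω → U) (Y : Ω → V) (Z : Ω → W) : ℝ :=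
  cent q p X Z + cent q p Y Z - cent q p (fun ω => (X ω, Y ω)) Z

/-- `X` and `Y` have the same distribution. -/
def IdentDist (p : Ω → ℝ) {V : Type} [DecidableEq V] (X Y : Ω → V) : Prop :=
  ∀ v, prob p X v = prob p Y v

/-!
The answers and `F` reveal `W_𝒫` and nothing about the other messages, so the pair
`X = (Q_n, A_n)` together with `W_𝒫` is independent of the messages outside `𝒫`. User privacy
transfers this to one fixed `X` and all sets of `P` messages. As `P < K`, each message `W_i` lies
outside some such set, and the messages are mutually independent, so `I(W_i ; X, W_{-i}) = 0`
for every `i`. By the chain rule `I(W_1, …, W_K ; X) = 0`. Hence conditioning on all messages does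
not decrease the entropy of `A_n` given `Q_n`, and what is left of it must come from `S`.
-/

section FactorsThrough

variable {β : Type*}

lemma prodMk_factorsThrough_prodMk {γ γ' δ δ' : Type*} {f : β → γ} {f' : β → γ'} {g : β → δ}
    {g' : β → δ'} (hf : f'.FactorsThrough f) (hg : g'.FactorsThrough g) :
    (fun b => (f' b, g' b)).FactorsThrough fun b => (f b, g b) :=
  fun _ _ h => Prod.ext (hf (congrArg Prod.fst h)) (hg (congrArg Prod.snd h))

variable {ι : Type*} {α : ι → Type*} (M : β → ∀ i, α i) {s t u : Finset ι}

lemma restrict_factorsThrough_of_subset (hst : s ⊆ t) :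
    (fun b => s.restrict (M b)).FactorsThrough fun b => t.restrict (M b) :=
  fun _ _ h => congrArg (restrict₂ hst) h

lemma factorsThrough_restrict_univ [Fintype ι] : M.FactorsThrough fun b => univ.restrict (M b) :=
  fun _ _ h => funext fun i => congrFun h ⟨i, mem_univ i⟩

lemma prodMk_restrict_factorsThrough {i : ι} (hi : i ∈ t) (hst : s ⊆ t) :
    (fun b => (M b i, s.restrict (M b))).FactorsThrough fun b => t.restrict (M b) :=
  fun _ _ h => Prod.ext (congrFun h ⟨i, hi⟩) (restrict_factorsThrough_of_subset M hst h)

lemma restrict_factorsThrough_of_subset_insert [DecidableEq ι] {i : ι} (ht : t ⊆ insert i s) :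
    (fun b => t.restrict (M b)).FactorsThrough fun b => (M b i, s.restrict (M b)) := by
  intro b b' h
  obtain ⟨hi, hs⟩ := Prod.ext_iff.1 h
  ext ⟨j, hj⟩
  obtain rfl | hjs := mem_insert.1 (ht hj)
  · exact hi
  · exact congrFun hs ⟨j, hjs⟩

lemma restrict_factorsThrough_of_subset_union [DecidableEq ι] (hu : u ⊆ s ∪ t) :
    (fun b => u.restrict (M b)).FactorsThrough
      fun b => (s.restrict (M b), t.restrict (M b)) := by
  intro b b' h
  obtain ⟨hs, ht⟩ := Prod.ext_iff.1 h
  ext ⟨j, hj⟩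
  obtain hjs | hjt := mem_union.1 (hu hj)
  · exact congrFun hs ⟨j, hjs⟩
  · exact congrFun ht ⟨j, hjt⟩

end FactorsThrough

section Probability

variable {V U : Type} [DecidableEq V] [DecidableEq U] {p : Ω → ℝ}

lemma prob_nonneg (hp : ∀ ω, 0 ≤ p ω) (X : Ω → V) (v : V) : 0 ≤ prob p X v :=
  sum_nonneg fun ω _ => hp ω

lemma le_prob_self (hp : ∀ ω, 0 ≤ p ω) (X : Ω → V) (ω : Ω) : p ω ≤ prob p X (X ω) :=
  single_le_sum (fun ω _ => hp ω) (by simp)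

lemma prob_self_pos (hp : ∀ ω, 0 ≤ p ω) (X : Ω → V) {ω : Ω} (hω : 0 < p ω) :
    0 < prob p X (X ω) :=
  hω.trans_le (le_prob_self hp X ω)

lemma prob_le_prob_of_factorsThrough (hp : ∀ ω, 0 ≤ p ω) {X : Ω → V} {Y : Ω → U}
    (hYX : Y.FactorsThrough X) (ω : Ω) : prob p X (X ω) ≤ prob p Y (Y ω) :=
  sum_le_sum_of_subset_of_nonneg
    (monotone_filter_right _ fun _ _ hX => hYX hX) fun ω _ _ => hp ω

lemma sum_prob_mul [Fintype V] (p : Ω → ℝ) (X : Ω → V) (g : V → ℝ) :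
    ∑ v, prob p X v * g v = ∑ ω, p ω * g (X ω) := by
  rw [← sum_fiberwise univ X]
  refine sum_congr rfl fun v _ => ?_
  rw [prob, sum_mul]
  exact sum_congr rfl fun ω hω => by rw [(mem_filter.1 hω).2]

lemma sum_prob [Fintype V] (p : Ω → ℝ) (X : Ω → V) : ∑ v, prob p X v = ∑ ω, p ω := by
  simpa only [mul_one] using sum_prob_mul p X fun _ => 1

lemma sum_prob_prodMk_left [Fintype V] (p : Ω → ℝ) (X : Ω → V) (Y : Ω → U) (u : U) :
    ∑ v, prob p (fun ω => (X ω, Y ω)) (v, u) = prob p Y u := by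
  simp only [prob, Prod.mk.injEq, and_comm (b := Y _ = u), ← filter_filter]
  exact sum_fiberwise _ X p

lemma prob_comp [Fintype V] (p : Ω → ℝ) (X : Ω → V) (f : V → U) (u : U) :
    prob p (fun ω => f (X ω)) u = ∑ v, prob p X v * if f v = u then 1 else 0 := by
  rw [sum_prob_mul p X fun v => if f v = u then 1 else 0]
  simp only [prob, sum_filter, mul_ite, mul_one, mul_zero]

lemma IdentDist.comp [Finite V] {X Y : Ω → V} (h : IdentDist p X Y) (f : V → U) :
    IdentDist p (fun ω => f (X ω)) (fun ω => f (Y ω)) := fun u => by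
  have := Fintype.ofFinite V
  simp only [prob_comp, h _]

end Probability

section CondIndepDensity

variable {V U T : Type} [DecidableEq V] [DecidableEq U] [DecidableEq T] {p : Ω → ℝ}

/-- The density, relative to the law of `((X, Y), Z)`, of the law with the same `(X, Z)` and
`(Y, Z)` marginals under which `X` and `Y` are conditionally independent given `Z`. It serves to
prove `cmi_nonneg` by Gibbs' inequality; its value is `0` where a denominator vanishes. -/
noncomputable def condIndepDensity (p : Ω → ℝ) (X : Ω → V) (Y : Ω → U) (Z : Ω → T)
    (t : (V × U) × T) : ℝ :=
  prob p (fun ω => (X ω, Z ω)) (t.1.1, t.2) * prob p (fun ω => (Y ω, Z ω)) (t.1.2, t.2) /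
    prob p Z t.2 / prob p (fun ω => ((X ω, Y ω), Z ω)) t

lemma condIndepDensity_pos (hp : ∀ ω, 0 ≤ p ω) (X : Ω → V) (Y : Ω → U) (Z : Ω → T) {ω : Ω}
    (hω : 0 < p ω) : 0 < condIndepDensity p X Y Z ((X ω, Y ω), Z ω) :=
  div_pos (div_pos (mul_pos (prob_self_pos hp (fun ω => (X ω, Z ω)) hω)
    (prob_self_pos hp (fun ω => (Y ω, Z ω)) hω)) (prob_self_pos hp Z hω))
    (prob_self_pos hp (fun ω => ((X ω, Y ω), Z ω)) hω)

lemma logb_condIndepDensity (q : ℕ) (hp : ∀ ω, 0 ≤ p ω) (X : Ω → V) (Y : Ω → U) (Z : Ω → T)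
    {ω : Ω} (hω : 0 < p ω) :
    Real.logb q (condIndepDensity p X Y Z ((X ω, Y ω), Z ω)) =
      Real.logb q (prob p (fun ω => (X ω, Z ω)) (X ω, Z ω)) +
        Real.logb q (prob p (fun ω => (Y ω, Z ω)) (Y ω, Z ω)) - Real.logb q (prob p Z (Z ω)) -
          Real.logb q (prob p (fun ω => ((X ω, Y ω), Z ω)) ((X ω, Y ω), Z ω)) := by
  have hXZ := prob_self_pos hp (fun ω => (X ω, Z ω)) hω
  have hYZ := prob_self_pos hp (fun ω => (Y ω, Z ω)) hω
  have hZ := prob_self_pos hp Z hω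
  have hXYZ := prob_self_pos hp (fun ω => ((X ω, Y ω), Z ω)) hω
  rw [condIndepDensity, Real.logb_div (by positivity) hXYZ.ne',
    Real.logb_div (by positivity) hZ.ne', Real.logb_mul hXZ.ne' hYZ.ne']

variable [Fintype V] [Fintype U] [Fintype T]

lemma sum_prob_mul_prob_div_prob (p : Ω → ℝ) (X : Ω → V) (Y : Ω → U) (Z : Ω → T) :
    ∑ t : (V × U) × T, prob p (fun ω => (X ω, Z ω)) (t.1.1, t.2) *
      prob p (fun ω => (Y ω, Z ω)) (t.1.2, t.2) / prob p Z t.2 = ∑ ω, p ω := by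
  rw [Fintype.sum_prod_type_right, ← sum_prob p Z]
  refine sum_congr rfl fun z _ => ?_
  simp only [← sum_div, Fintype.sum_prod_type, ← sum_mul_sum, sum_prob_prodMk_left,
    mul_self_div_self]

lemma sum_prob_mul_condIndepDensity_le (hp : ∀ ω, 0 ≤ p ω) (X : Ω → V) (Y : Ω → U)
    (Z : Ω → T) :
    ∑ t, prob p (fun ω => ((X ω, Y ω), Z ω)) t * condIndepDensity p X Y Z t ≤ ∑ ω, p ω := by
  rw [← sum_prob_mul_prob_div_prob p X Y Z]
  refine sum_le_sum fun t _ => ?_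
  have hratio := div_nonneg (mul_nonneg (prob_nonneg hp (fun ω => (X ω, Z ω)) (t.1.1, t.2))
    (prob_nonneg hp (fun ω => (Y ω, Z ω)) (t.1.2, t.2))) (prob_nonneg hp Z t.2)
  rw [condIndepDensity]
  rcases eq_or_ne (prob p (fun ω => ((X ω, Y ω), Z ω)) t) 0 with ht | ht
  · rwa [ht, zero_mul]
  · rw [mul_div_cancel₀ _ ht]

end CondIndepDensity

section Entropy

variable {V V' U U' T : Type} [Fintype V] [DecidableEq V] [Fintype V'] [DecidableEq V']
  [Fintype U] [DecidableEq U] [Fintype U'] [DecidableEq U'] [Fintype T] [DecidableEq T]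
  {q : ℕ} {p : Ω → ℝ}

lemma ent_eq_neg_sum (q : ℕ) (p : Ω → ℝ) (X : Ω → V) :
    ent q p X = -∑ ω, p ω * Real.logb q (prob p X (X ω)) := by
  rw [ent, sum_prob_mul p X fun v => Real.logb q (prob p X v)]

lemma ent_const (hp1 : ∑ ω, p ω = 1) (v : V) : ent q p (fun _ => v) = 0 := by
  simp [ent_eq_neg_sum, prob, hp1]

lemma ent_le_of_factorsThrough (hq : 1 < q) (hp : ∀ ω, 0 ≤ p ω) {X : Ω → V} {Y : Ω → U}
    (hYX : Y.FactorsThrough X) : ent q p Y ≤ ent q p X := by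
  rw [ent_eq_neg_sum, ent_eq_neg_sum, neg_le_neg_iff]
  refine sum_le_sum fun ω _ => ?_
  rcases (hp ω).eq_or_lt with hω | hω
  · simp [← hω]
  · exact mul_le_mul_of_nonneg_left (Real.logb_le_logb_of_le (by exact_mod_cast hq)
      (prob_self_pos hp X hω) (prob_le_prob_of_factorsThrough hp hYX ω)) hω.le

lemma IdentDist.ent_eq {X Y : Ω → V} (h : IdentDist p X Y) : ent q p X = ent q p Y := by
  simp only [ent, h _]

lemma IdentDist.mi_eq {R : Type} [Finite R] [DecidableEq R] {X Y : Ω → R}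
    (h : IdentDist p X Y) (f : R → U) (g : R → T) :
    mi q p (fun ω => f (X ω)) (fun ω => g (X ω)) =
      mi q p (fun ω => f (Y ω)) (fun ω => g (Y ω)) := by
  rw [mi, mi, (h.comp f).ent_eq, (h.comp g).ent_eq, (h.comp fun v => (f v, g v)).ent_eq]

-- Gibbs' inequality: `r` is the ratio of two densities.
lemma sum_mul_logb_nonpos (hq : 1 < q) (hp : ∀ ω, 0 ≤ p ω) {r : Ω → ℝ}
    (hr : ∀ ω, 0 < p ω → 0 < r ω) (hsum : ∑ ω, p ω * r ω ≤ ∑ ω, p ω) :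
    ∑ ω, p ω * Real.logb q (r ω) ≤ 0 := by
  have hlogq : 0 < Real.log q := Real.log_pos (by exact_mod_cast hq)
  have hlog (ω : Ω) : p ω * Real.log (r ω) ≤ p ω * r ω - p ω := by
    rcases (hp ω).eq_or_lt with hω | hω
    · simp [← hω]
    · calc p ω * Real.log (r ω) ≤ p ω * (r ω - 1) :=
            mul_le_mul_of_nonneg_left (Real.log_le_sub_one_of_pos (hr ω hω)) hω.le
        _ = p ω * r ω - p ω := by ring
  calc ∑ ω, p ω * Real.logb q (r ω) = (∑ ω, p ω * Real.log (r ω)) / Real.log q := by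
        simp only [Real.logb, sum_div, mul_div_assoc]
    _ ≤ (∑ ω, (p ω * r ω - p ω)) / Real.log q := by gcongr with ω; exact hlog ω
    _ ≤ 0 := div_nonpos_of_nonpos_of_nonneg
        (by rw [sum_sub_distrib]; exact sub_nonpos.2 hsum) hlogq.le

theorem cmi_nonneg (hq : 1 < q) (hp : ∀ ω, 0 ≤ p ω) (X : Ω → V) (Y : Ω → U) (Z : Ω → T) :
    0 ≤ cmi q p X Y Z := by
  have hlogb (ω : Ω) : p ω * Real.logb q (condIndepDensity p X Y Z ((X ω, Y ω), Z ω)) =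
      p ω * Real.logb q (prob p (fun ω => (X ω, Z ω)) (X ω, Z ω)) +
        p ω * Real.logb q (prob p (fun ω => (Y ω, Z ω)) (Y ω, Z ω)) -
        p ω * Real.logb q (prob p Z (Z ω)) -
        p ω * Real.logb q (prob p (fun ω => ((X ω, Y ω), Z ω)) ((X ω, Y ω), Z ω)) := by
    rcases (hp ω).eq_or_lt with hω | hω
    · simp [← hω]
    · rw [logb_condIndepDensity q hp X Y Z hω]; ring
  have hcmi : ∑ ω, p ω * Real.logb q (condIndepDensity p X Y Z ((X ω, Y ω), Z ω)) =
      -cmi q p X Y Z := by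
    simp only [hlogb, sum_add_distrib, sum_sub_distrib, cmi, cent, ent_eq_neg_sum]
    ring
  have hsum := sum_prob_mul_condIndepDensity_le hp X Y Z
  rw [sum_prob_mul] at hsum
  have hgibbs := sum_mul_logb_nonpos hq hp
    (fun _ hω => condIndepDensity_pos hp X Y Z hω) hsum
  rwa [hcmi, neg_nonpos] at hgibbs

lemma cent_le_of_factorsThrough (hq : 1 < q) (hp : ∀ ω, 0 ≤ p ω) (X : Ω → V) {Y : Ω → U}
    {Z : Ω → T} (hZY : Z.FactorsThrough Y) : cent q p X Y ≤ cent q p X Z := by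
  have hcmi := cmi_nonneg hq hp X Y Z
  have hXYZ : ent q p (fun ω => (X ω, Y ω)) ≤ ent q p (fun ω => ((X ω, Y ω), Z ω)) :=
    ent_le_of_factorsThrough hq hp fun _ _ h => (Prod.ext_iff.1 h).1
  have hYZ : ent q p (fun ω => (Y ω, Z ω)) ≤ ent q p Y :=
    ent_le_of_factorsThrough hq hp fun _ _ h => Prod.ext h (hZY h)
  simp only [cmi, cent] at hcmi ⊢
  linarith

lemma mi_eq_ent_sub_cent (q : ℕ) (p : Ω → ℝ) (X : Ω → V) (Y : Ω → U) :
    mi q p X Y = ent q p X - cent q p X Y := by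
  rw [mi, cent]; ring

lemma mi_comm (hq : 1 < q) (hp : ∀ ω, 0 ≤ p ω) (X : Ω → V) (Y : Ω → U) :
    mi q p X Y = mi q p Y X := by
  have hswap : ent q p (fun ω => (X ω, Y ω)) = ent q p (fun ω => (Y ω, X ω)) :=
    le_antisymm (ent_le_of_factorsThrough hq hp fun _ _ h => congrArg Prod.swap h)
      (ent_le_of_factorsThrough hq hp fun _ _ h => congrArg Prod.swap h)
  rw [mi, mi, hswap, add_comm (ent q p X)]

theorem mi_le_mi_of_factorsThrough (hq : 1 < q) (hp : ∀ ω, 0 ≤ p ω) {X : Ω → V} {X' : Ω → V'}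
    {Y : Ω → U} {Y' : Ω → U'} (hX : X'.FactorsThrough X) (hY : Y'.FactorsThrough Y) :
    mi q p X' Y' ≤ mi q p X Y := by
  calc mi q p X' Y' ≤ mi q p X' Y := by
        rw [mi_eq_ent_sub_cent, mi_eq_ent_sub_cent]
        exact sub_le_sub_left (cent_le_of_factorsThrough hq hp X' hY) _
    _ = mi q p Y X' := mi_comm hq hp X' Y
    _ ≤ mi q p Y X := by
        rw [mi_eq_ent_sub_cent, mi_eq_ent_sub_cent]
        exact sub_le_sub_left (cent_le_of_factorsThrough hq hp Y hX) _
    _ = mi q p X Y := mi_comm hq hp Y X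

theorem ent_prodMk_le (hq : 1 < q) (hp : ∀ ω, 0 ≤ p ω) (hp1 : ∑ ω, p ω = 1) (X : Ω → V)
    (Y : Ω → U) : ent q p (fun ω => (X ω, Y ω)) ≤ ent q p X + ent q p Y := by
  have hconst : mi q p X (fun _ => ()) = ent q p X + 0 - ent q p (fun ω => (X ω, ())) := by
    rw [mi, ent_const hp1]
  have hX : ent q p (fun ω => (X ω, ())) ≤ ent q p X :=
    ent_le_of_factorsThrough hq hp fun _ _ h => Prod.ext h rfl
  have hmi : mi q p X (fun _ => ()) ≤ mi q p X Y :=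
    mi_le_mi_of_factorsThrough hq hp .rfl fun _ _ _ => rfl
  rw [hconst, mi] at hmi
  linarith

lemma mi_prodMk_left_le (hq : 1 < q) (hp : ∀ ω, 0 ≤ p ω) (hp1 : ∑ ω, p ω = 1) (X : Ω → V)
    (Y : Ω → U) (Z : Ω → T) :
    mi q p (fun ω => (X ω, Y ω)) Z ≤ mi q p X (fun ω => (Z ω, Y ω)) + mi q p Y Z := by
  have hXY := ent_prodMk_le hq hp hp1 X Y
  have hYZ : ent q p (fun ω => (Y ω, Z ω)) ≤ ent q p (fun ω => (Z ω, Y ω)) :=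
    ent_le_of_factorsThrough hq hp fun _ _ h => congrArg Prod.swap h
  have hXYZ : ent q p (fun ω => (X ω, (Z ω, Y ω))) ≤ ent q p (fun ω => ((X ω, Y ω), Z ω)) :=
    ent_le_of_factorsThrough hq hp fun _ _ h =>
      congrArg (fun t : (V × U) × T => (t.1.1, (t.2, t.1.2))) h
  simp only [mi]
  linarith

lemma mi_prodMk_right_le (hq : 1 < q) (hp : ∀ ω, 0 ≤ p ω) (hp1 : ∑ ω, p ω = 1) (X : Ω → V)
    (Y : Ω → U) (Z : Ω → T) :
    mi q p X (fun ω => (Z ω, Y ω)) ≤ mi q p (fun ω => (X ω, Y ω)) Z + mi q p X Y := by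
  have hZY := ent_prodMk_le hq hp hp1 Z Y
  have hXYZ : ent q p (fun ω => ((X ω, Y ω), Z ω)) ≤ ent q p (fun ω => (X ω, (Z ω, Y ω))) :=
    ent_le_of_factorsThrough hq hp fun _ _ h =>
      congrArg (fun t : V × T × U => ((t.1, t.2.2), t.2.1)) h
  simp only [mi]
  linarith

lemma mi_prodMk_right_le_add_cent (hq : 1 < q) (hp : ∀ ω, 0 ≤ p ω) (X : Ω → V) (Y : Ω → U)
    (Z : Ω → T) : mi q p X (fun ω => (Y ω, Z ω)) ≤ mi q p X Y + cent q p Z Y := by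
  have hYZ : ent q p (fun ω => (Y ω, Z ω)) ≤ ent q p (fun ω => (Z ω, Y ω)) :=
    ent_le_of_factorsThrough hq hp fun _ _ h => congrArg Prod.swap h
  have hXYZ : ent q p (fun ω => (X ω, Y ω)) ≤ ent q p (fun ω => (X ω, (Y ω, Z ω))) :=
    ent_le_of_factorsThrough hq hp fun _ _ h => congrArg (fun t => (t.1, t.2.1)) h
  simp only [mi, cent]
  linarith

lemma mi_prodMk_le_of_factorsThrough (hq : 1 < q) (hp : ∀ ω, 0 ≤ p ω) (Y : Ω → V) (Z : Ω → U)
    {X : Ω → T} {D : Ω → V'} {E : Ω → U'} (hX : X.FactorsThrough E) (hD : D.FactorsThrough E) :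
    mi q p Y (fun ω => (X ω, Z ω)) ≤ mi q p Y E + cent q p Z D := by
  calc mi q p Y (fun ω => (X ω, Z ω)) ≤ mi q p Y (fun ω => (E ω, Z ω)) :=
        mi_le_mi_of_factorsThrough hq hp .rfl (prodMk_factorsThrough_prodMk hX .rfl)
    _ ≤ mi q p Y E + cent q p Z E := mi_prodMk_right_le_add_cent hq hp Y E Z
    _ ≤ mi q p Y E + cent q p Z D := by gcongr; exact cent_le_of_factorsThrough hq hp Z hD

theorem cent_le_ent_add_mi_add_cent (hq : 1 < q) (hp : ∀ ω, 0 ≤ p ω) (hp1 : ∑ ω, p ω = 1)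
    (X : Ω → V) (Y : Ω → U) (M : Ω → T) (S : Ω → V') :
    cent q p X Y ≤
      ent q p S + mi q p M (fun ω => (Y ω, X ω)) + cent q p X (fun ω => (Y ω, M ω, S ω)) := by
  have hYMS := ent_prodMk_le hq hp hp1 Y fun ω => (M ω, S ω)
  have hMS := ent_prodMk_le hq hp hp1 M S
  have hXY : ent q p (fun ω => (X ω, Y ω)) ≤ ent q p (fun ω => (Y ω, X ω)) :=
    ent_le_of_factorsThrough hq hp fun _ _ h => congrArg Prod.swap h
  have hMYX : ent q p (fun ω => (M ω, (Y ω, X ω))) ≤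
      ent q p (fun ω => (X ω, (Y ω, M ω, S ω))) :=
    ent_le_of_factorsThrough hq hp fun _ _ h =>
      congrArg (fun t => (t.2.2.1, (t.2.1, t.1))) h
  simp only [cent, mi]
  linarith

end Entropy

section Families

variable {ι : Type} [DecidableEq ι] {α : ι → Type}
  [∀ i, Fintype (α i)] [∀ i, DecidableEq (α i)]
  {V : Type} [Fintype V] [DecidableEq V] {q : ℕ} {p : Ω → ℝ}

lemma ent_restrict_le_sum (hq : 1 < q) (hp : ∀ ω, 0 ≤ p ω) (hp1 : ∑ ω, p ω = 1)
    (M : Ω → ∀ i, α i) (s : Finset ι) :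
    ent q p (fun ω => s.restrict (M ω)) ≤ ∑ i ∈ s, ent q p fun ω => M ω i := by
  induction s using Finset.induction_on with
  | empty =>
    have hconst := ent_le_of_factorsThrough hq hp (X := fun _ => ())
      (Y := fun ω => (∅ : Finset ι).restrict (M ω)) fun _ _ _ => Subsingleton.elim _ _
    rwa [ent_const hp1] at hconst
  | insert i s hi ih =>
    rw [sum_insert hi]
    exact (ent_le_of_factorsThrough hq hp
      (restrict_factorsThrough_of_subset_insert M Subset.rfl)).trans
      ((ent_prodMk_le hq hp hp1 _ _).trans (add_le_add_right ih _))

variable [Fintype ι]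

lemma mi_apply_restrict_le (hq : 1 < q) (hp : ∀ ω, 0 ≤ p ω) (hp1 : ∑ ω, p ω = 1)
    (M : Ω → ∀ i, α i) {i : ι} {s : Finset ι} (hi : i ∉ s) :
    mi q p (fun ω => M ω i) (fun ω => s.restrict (M ω)) ≤
      ∑ j, ent q p (fun ω => M ω j) - ent q p M := by
  have hM : M.FactorsThrough fun ω => (M ω i, (univ.erase i).restrict (M ω)) := fun _ _ h =>
    factorsThrough_restrict_univ M
      (restrict_factorsThrough_of_subset_insert M (insert_erase (mem_univ i)).ge h)
  calc mi q p (fun ω => M ω i) (fun ω => s.restrict (M ω))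
      ≤ mi q p (fun ω => M ω i) (fun ω => (univ.erase i).restrict (M ω)) :=
        mi_le_mi_of_factorsThrough hq hp .rfl
          (restrict_factorsThrough_of_subset M (subset_erase.2 ⟨subset_univ s, hi⟩))
    _ ≤ ent q p (fun ω => M ω i) + ∑ j ∈ univ.erase i, ent q p (fun ω => M ω j) - ent q p M :=
        sub_le_sub (add_le_add_right (ent_restrict_le_sum hq hp hp1 M _) _)
          (ent_le_of_factorsThrough hq hp hM)
    _ = ∑ j, ent q p (fun ω => M ω j) - ent q p M := by
        rw [add_sum_erase univ (fun j => ent q p fun ω => M ω j) (mem_univ i)]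

lemma mi_restrict_le_sum (hq : 1 < q) (hp : ∀ ω, 0 ≤ p ω) (hp1 : ∑ ω, p ω = 1)
    (M : Ω → ∀ i, α i) (X : Ω → V) (s : Finset ι) :
    mi q p (fun ω => s.restrict (M ω)) X ≤
      ∑ i ∈ s, mi q p (fun ω => M ω i) (fun ω => (X ω, (univ.erase i).restrict (M ω))) := by
  induction s using Finset.induction_on with
  | empty =>
    rw [sum_empty]
    calc mi q p (fun ω => (∅ : Finset ι).restrict (M ω)) X ≤ mi q p (fun _ => ()) X :=
          mi_le_mi_of_factorsThrough hq hp (fun _ _ _ => Subsingleton.elim _ _) .rfl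
      _ ≤ 0 := by
          have hX : ent q p X ≤ ent q p (fun ω => ((), X ω)) :=
            ent_le_of_factorsThrough hq hp fun _ _ h => congrArg Prod.snd h
          rw [mi, ent_const hp1]
          linarith
  | insert i s hi ih =>
    rw [sum_insert hi]
    calc mi q p (fun ω => (insert i s).restrict (M ω)) X
        ≤ mi q p (fun ω => (M ω i, s.restrict (M ω))) X :=
          mi_le_mi_of_factorsThrough hq hp
            (restrict_factorsThrough_of_subset_insert M Subset.rfl) .rfl
      _ ≤ mi q p (fun ω => M ω i) (fun ω => (X ω, s.restrict (M ω))) +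
            mi q p (fun ω => s.restrict (M ω)) X := mi_prodMk_left_le hq hp hp1 _ _ _
      _ ≤ _ := add_le_add (mi_le_mi_of_factorsThrough hq hp .rfl
          (prodMk_factorsThrough_prodMk .rfl (restrict_factorsThrough_of_subset M
            (subset_erase.2 ⟨subset_univ s, hi⟩)))) ih

lemma mi_le_sum_mi_apply (hq : 1 < q) (hp : ∀ ω, 0 ≤ p ω) (hp1 : ∑ ω, p ω = 1)
    (M : Ω → ∀ i, α i) (X : Ω → V) :
    mi q p M X ≤
      ∑ i, mi q p (fun ω => M ω i) (fun ω => (X ω, (univ.erase i).restrict (M ω))) :=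
  (mi_le_mi_of_factorsThrough hq hp (factorsThrough_restrict_univ M) .rfl).trans
    (mi_restrict_le_sum hq hp hp1 M X univ)

lemma mi_apply_prodMk_restrict_erase_le (hq : 1 < q) (hp : ∀ ω, 0 ≤ p ω)
    (hp1 : ∑ ω, p ω = 1) (M : Ω → ∀ i, α i) (X : Ω → V) {i : ι} {s : Finset ι} (hi : i ∉ s) :
    mi q p (fun ω => M ω i) (fun ω => (X ω, (univ.erase i).restrict (M ω))) ≤
      mi q p (fun ω => sᶜ.restrict (M ω)) (fun ω => (X ω, s.restrict (M ω))) +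
        (∑ j, ent q p (fun ω => M ω j) - ent q p M) := by
  have herase : univ.erase i ⊆ s ∪ sᶜ.erase i := fun j hj => by
    by_cases hjs : j ∈ s <;> simp_all
  calc mi q p (fun ω => M ω i) (fun ω => (X ω, (univ.erase i).restrict (M ω)))
      ≤ mi q p (fun ω => M ω i)
          (fun ω => ((X ω, s.restrict (M ω)), (sᶜ.erase i).restrict (M ω))) :=
        mi_le_mi_of_factorsThrough hq hp .rfl fun _ _ h =>
          Prod.ext (congrArg (fun t => t.1.1) h) (restrict_factorsThrough_of_subset_union M herase
            (congrArg (fun t => (t.1.2, t.2)) h))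
    _ ≤ mi q p (fun ω => (M ω i, (sᶜ.erase i).restrict (M ω)))
            (fun ω => (X ω, s.restrict (M ω))) +
          mi q p (fun ω => M ω i) (fun ω => (sᶜ.erase i).restrict (M ω)) :=
        mi_prodMk_right_le hq hp hp1 _ _ _
    _ ≤ _ := add_le_add
        (mi_le_mi_of_factorsThrough hq hp
          (prodMk_restrict_factorsThrough M (mem_compl.2 hi) (erase_subset i sᶜ)) .rfl)
        (mi_apply_restrict_le hq hp hp1 M (notMem_erase i _))

end Families

theorem answer_entropy_le_common_randomness_general
    {ι ν QT AT FT ST : Type} {MT : ι → Type}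
    [Fintype ι] [DecidableEq ι] [Fintype ν] [DecidableEq ν]
    [∀ k, Fintype (MT k)] [∀ k, DecidableEq (MT k)] [Fintype QT] [DecidableEq QT]
    [Fintype AT] [DecidableEq AT] [Fintype FT] [DecidableEq FT] [Fintype ST] [DecidableEq ST]
    {P q : ℕ} (hq : 1 < q) (hP : P < Fintype.card ι)
    {p : Ω → ℝ} (hp0 : ∀ ω, 0 ≤ p ω) (hp1 : ∑ ω, p ω = 1)
    (W : ∀ k, Ω → MT k) (F : Ω → FT) (S : Ω → ST)
    (Q : Finset ι → ν → Ω → QT) (A : Finset ι → ν → Ω → AT)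
    (hW : ent q p (fun ω k => W k ω) = ∑ k, ent q p (W k))
    (hAdet : ∀ 𝒫₀ : Finset ι, 𝒫₀.card = P → ∀ n,
      cent q p (A 𝒫₀ n) (fun ω => (Q 𝒫₀ n ω, (fun k => W k ω), S ω)) = 0)
    (hrel : ∀ 𝒫₀ : Finset ι, 𝒫₀.card = P →
      cent q p (fun ω => 𝒫₀.restrict fun k => W k ω) (fun ω => ((fun n => A 𝒫₀ n ω), F ω)) = 0)
    (hupriv : ∀ (n : ν) (𝒫₁ 𝒫₂ : Finset ι), 𝒫₁.card = P → 𝒫₂.card = P →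
      IdentDist p (fun ω => (Q 𝒫₁ n ω, A 𝒫₁ n ω, (fun k => W k ω), S ω))
        (fun ω => (Q 𝒫₂ n ω, A 𝒫₂ n ω, (fun k => W k ω), S ω)))
    (hdpriv : ∀ 𝒫₀ : Finset ι, 𝒫₀.card = P →
      mi q p (fun ω => 𝒫₀ᶜ.restrict fun k => W k ω)
        (fun ω => ((fun n => Q 𝒫₀ n ω), (fun n => A 𝒫₀ n ω), F ω)) = 0)
    (𝒫₀ : Finset ι) (h𝒫₀ : 𝒫₀.card = P) (n : ν) :
    cent q p (A 𝒫₀ n) (Q 𝒫₀ n) ≤ ent q p S := by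
  set M : Ω → ∀ k, MT k := fun ω k => W k ω
  have hview : ∀ s : Finset ι, s.card = P → mi q p (fun ω => sᶜ.restrict (M ω))
      (fun ω => ((Q 𝒫₀ n ω, A 𝒫₀ n ω), s.restrict (M ω))) ≤ 0 := fun s hs => by
    rw [(hupriv n 𝒫₀ s h𝒫₀ hs).mi_eq (fun t => sᶜ.restrict t.2.2.1)
      fun t => ((t.1, t.2.1), s.restrict t.2.2.1)]
    refine (mi_prodMk_le_of_factorsThrough hq hp0 _ _ (fun _ _ h => ?_) fun _ _ h => ?_).trans
      (add_nonpos (hdpriv s hs).le (hrel s hs).le)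
    · exact congrArg (fun t => (t.1 n, t.2.1 n)) h
    · exact congrArg Prod.snd h
  have hmessage : ∀ i, mi q p (fun ω => M ω i)
      (fun ω => ((Q 𝒫₀ n ω, A 𝒫₀ n ω), (univ.erase i).restrict (M ω))) ≤ 0 := fun i => by
    obtain ⟨s, hs, hsP⟩ := exists_subset_card_eq (s := univ.erase i) (n := P) <| by
      rw [card_erase_of_mem (mem_univ i), card_univ]; omega
    have hi : i ∉ s := fun h => notMem_erase i univ (hs h)
    exact (mi_apply_prodMk_restrict_erase_le hq hp0 hp1 M _ hi).trans
      (add_nonpos (hview s hsP) (sub_nonpos.2 hW.ge))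
  have hmessages : mi q p M (fun ω => (Q 𝒫₀ n ω, A 𝒫₀ n ω)) ≤ 0 :=
    (mi_le_sum_mi_apply hq hp0 hp1 M _).trans (sum_nonpos fun i _ => hmessage i)
  have hanswer := cent_le_ent_add_mi_add_cent hq hp0 hp1 (A 𝒫₀ n) (Q 𝒫₀ n) M S
  rw [hAdet 𝒫₀ h𝒫₀ n] at hanswer
  linarith

theorem answer_entropy_le_common_randomness
    {Ω MT QT AT FT ST : Type}
    [Fintype Ω] [Fintype MT] [DecidableEq MT] [Fintype QT] [DecidableEq QT]
    [Fintype AT] [DecidableEq AT] [Fintype FT] [DecidableEq FT]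
    [Fintype ST] [DecidableEq ST]
    (N K P L q : ℕ) (hN : 2 ≤ N) (hK : 2 ≤ K) (hP1 : 1 ≤ P) (hP2 : P ≤ K - 1)
    (hL : 1 ≤ L) (hq : IsPrimePow q)
    (p : Ω → ℝ) (hp0 : ∀ ω, 0 ≤ p ω) (hp1 : (∑ ω, p ω) = 1)
    (W : Fin K → Ω → MT) (F : Ω → FT) (S : Ω → ST)
    (Q : Finset (Fin K) → Fin N → Ω → QT)
    (A : Finset (Fin K) → Fin N → Ω → AT)
    (hWk : ∀ k, ent q p (W k) = (L : ℝ))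
    (hWall : ent q p (fun ω (k : Fin K) => W k ω) = (K : ℝ) * L)
    (hind : ent q p (fun ω => (F ω, S ω, fun k : Fin K => W k ω)) =
      ent q p F + ent q p S + ent q p (fun ω (k : Fin K) => W k ω))
    (hQdet : ∀ 𝒫₀ : Finset (Fin K), 𝒫₀.card = P →
      cent q p (fun ω (n : Fin N) => Q 𝒫₀ n ω) F = 0)
    (hAdet : ∀ 𝒫₀ : Finset (Fin K), 𝒫₀.card = P → ∀ n : Fin N,
      cent q p (A 𝒫₀ n) (fun ω => (Q 𝒫₀ n ω, (fun k : Fin K => W k ω), S ω)) = 0)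
    (hrel : ∀ 𝒫₀ : Finset (Fin K), 𝒫₀.card = P →
      cent q p (fun ω (k : {x : Fin K // x ∈ 𝒫₀}) => W k.1 ω)
        (fun ω => ((fun n : Fin N => A 𝒫₀ n ω), F ω)) = 0)
    (hupriv : ∀ (n : Fin N) (𝒫₁ 𝒫₂ : Finset (Fin K)), 𝒫₁.card = P → 𝒫₂.card = P →
      IdentDist p
        (fun ω => (Q 𝒫₁ n ω, A 𝒫₁ n ω, (fun k : Fin K => W k ω), S ω))
        (fun ω => (Q 𝒫₂ n ω, A 𝒫₂ n ω, (fun k : Fin K => W k ω), S ω)))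
    (hdpriv : ∀ 𝒫₀ : Finset (Fin K), 𝒫₀.card = P →
      mi q p (fun ω (k : {x : Fin K // x ∈ 𝒫₀ᶜ}) => W k.1 ω)
        (fun ω => ((fun n : Fin N => Q 𝒫₀ n ω), (fun n : Fin N => A 𝒫₀ n ω), F ω)) = 0)
    : ∀ (𝒫₀ : Finset (Fin K)), 𝒫₀.card = P → ∀ n : Fin N,
      cent q p (A 𝒫₀ n) (Q 𝒫₀ n) ≤ ent q p S := by
  exact answer_entropy_le_common_randomness_general hq.one_lt (by rw [Fintype.card_fin]; omega)
    hp0 hp1 W F S Q A (by simp [hWall, hWk]) hAdet hrel hupriv hdpriv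

end MMSPIR
end

section
/- (Algebraic identity underlying Lemma 8: the achievable scheme has rate 1 − 1/N.) Let N ≥ 2, K ≥ 2, and P be integers with 1 ≤ P ≤ K−1, and let r be a positive real number satisfying (1 + 1/r)^P = N. Define D1 = Σ_{k=1}^{K} C(K,k)·r^{K−P−k}, U1 = Σ_{k=1}^{K−P} C(K−P,k)·r^{K−P−k}, and D2 = (1/(N−1))·Σ_{k=1}^{P} C(P,k)·r^{K−P−k} (integer powers of r, possibly negative). Then D2 = r^{K−P} and D1 = N·U1 + (N−1)·D2; consequently (D1 − U1)/(D1 + D2) = 1 − 1/N. -/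
open Finset

namespace MMSPIR

variable {Ω : Type} [Fintype Ω]

/-! By the binomial theorem each of the three sums has the form
`r ^ a * ((1 + 1 / r) ^ m - 1)`. With `A = r ^ (K - P)` and `q = (1 + 1 / r) ^ (K - P)`, the root
equation `(1 + 1 / r) ^ P = N` turns them into `D1 = A * (N * q - 1)`, `U1 = A * (q - 1)` and
`D2 = A`. In the rate, the `-1` of `D1` cancels against `D2` in the denominator and against the
`-1` of `U1` in the numerator, which leaves `A * (N - 1) * q` over `A * N * q`. -/

lemma sum_range_choose_mul_zpow_sub {F : Type*} [Semifield F] {r : F} (hr : r ≠ 0) (a : ℤ) (m : ℕ) :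
    ∑ k ∈ range (m + 1), (m.choose k : F) * r ^ (a - k) = r ^ a * (1 + 1 / r) ^ m := by
  rw [add_comm 1 (1 / r), add_pow, mul_sum]
  refine sum_congr rfl fun k _ => ?_
  rw [zpow_sub₀ hr, zpow_natCast, one_pow, one_div_pow]
  ring

section

variable {F : Type*} [Field F] {r : F}

lemma sum_Icc_one_choose_mul_zpow_sub (hr : r ≠ 0) (a : ℤ) (m : ℕ) :
    ∑ k ∈ Icc 1 m, (m.choose k : F) * r ^ (a - k) = r ^ a * ((1 + 1 / r) ^ m - 1) := by
  have hsplit := sum_range_choose_mul_zpow_sub hr a m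
  rw [sum_range_eq_add_Ico _ m.succ_pos, Nat.succ_eq_add_one, Ico_add_one_right_eq_Icc] at hsplit
  simp only [Nat.choose_zero_right, Nat.cast_one, Nat.cast_zero, sub_zero, one_mul] at hsplit
  rw [mul_sub_one, ← hsplit, add_sub_cancel_left]

theorem achievable_rate_identity_general {N : F} {K P : ℕ} (hN0 : N ≠ 0) (hN1 : N ≠ 1)
    (hPK : P ≤ K) (hr : r ≠ 0) (hroot : (1 + 1 / r) ^ P = N) {D1 U1 D2 : F}
    (hD1 : D1 = ∑ k ∈ Icc 1 K, (K.choose k : F) * r ^ ((K : ℤ) - P - k))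
    (hU1 : U1 = ∑ k ∈ Icc 1 (K - P), ((K - P).choose k : F) * r ^ ((K : ℤ) - P - k))
    (hD2 : D2 = (1 / (N - 1)) * ∑ k ∈ Icc 1 P, (P.choose k : F) * r ^ ((K : ℤ) - P - k)) :
    D2 = r ^ ((K : ℤ) - P) ∧ D1 = N * U1 + (N - 1) * D2 ∧
      (D1 - U1) / (D1 + D2) = 1 - 1 / N := by
  set A := r ^ ((K : ℤ) - P)
  set q := (1 + 1 / r) ^ (K - P) with hq
  have hK : (1 + 1 / r) ^ K = N * q := by rw [← hroot, hq, pow_mul_pow_sub _ hPK]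
  have hP : P ≠ 0 := by
    rintro rfl
    exact hN1 (hroot.symm.trans (pow_zero _))
  have hbase : 1 + 1 / r ≠ 0 := (pow_ne_zero_iff hP).mp (hroot ▸ hN0)
  have hAq : A * q ≠ 0 := mul_ne_zero (zpow_ne_zero _ hr) (pow_ne_zero _ hbase)
  replace hD1 : D1 = A * (N * q - 1) := by rw [hD1, sum_Icc_one_choose_mul_zpow_sub hr, hK]
  replace hU1 : U1 = A * (q - 1) := by rw [hU1, sum_Icc_one_choose_mul_zpow_sub hr]
  replace hD2 : D2 = A := by
    rw [hD2, sum_Icc_one_choose_mul_zpow_sub hr, hroot, mul_left_comm,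
      one_div_mul_cancel (sub_ne_zero.mpr hN1), mul_one]
  refine ⟨hD2, by rw [hD1, hU1, hD2]; ring, ?_⟩
  calc (D1 - U1) / (D1 + D2) = (A * q * (N - 1)) / (A * q * N) := by
        rw [hD1, hU1, hD2]; ring
    _ = (N - 1) / N := mul_div_mul_left _ _ hAq
    _ = 1 - 1 / N := by rw [sub_div, div_self hN0]

end

theorem achievable_rate_identity
    (N K P : ℕ) (hN : 2 ≤ N) (hK : 2 ≤ K) (hP1 : 1 ≤ P) (hP2 : P ≤ K - 1)
    (r : ℝ) (hr : 0 < r) (hroot : (1 + 1 / r) ^ P = (N : ℝ))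
    (D1 U1 D2 : ℝ)
    (hD1 : D1 = ∑ k ∈ Finset.Icc 1 K, (K.choose k : ℝ) * r ^ ((K : ℤ) - P - k))
    (hU1 : U1 = ∑ k ∈ Finset.Icc 1 (K - P), ((K - P).choose k : ℝ) * r ^ ((K : ℤ) - P - k))
    (hD2 : D2 = (1 / ((N : ℝ) - 1)) * ∑ k ∈ Finset.Icc 1 P, (P.choose k : ℝ) * r ^ ((K : ℤ) - P - k))
    : D2 = r ^ ((K : ℤ) - P) ∧ D1 = (N : ℝ) * U1 + ((N : ℝ) - 1) * D2 ∧
      (D1 - U1) / (D1 + D2) = 1 - 1 / (N : ℝ) := by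
  have hN0 : (N : ℝ) ≠ 0 := by exact_mod_cast (by lia : N ≠ 0)
  have hN1 : (N : ℝ) ≠ 1 := by exact_mod_cast (by lia : N ≠ 1)
  exact achievable_rate_identity_general hN0 hN1 (by lia) hr.ne' hroot hD1 hU1 hD2

end MMSPIR
end
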